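/- Existence and uniqueness of the CPK padding: fix a source index i and let r_{i'} ∈ F^{n+(s−1)+m}, for i' ∈ Fin s with i' ≠ i, be the controller's vectors. Assume the (s−1)×(s−1) matrix R whose entry in row i' and column l is the (n+l)-th coordinate of r_{i'} is invertible. Then for every data vector v̂ ∈ F^n and every augmentation index k ∈ Fin m, there exists a unique padding vector p ∈ F^{s−1} such that the padded packet (v̂, p, e_k) ∈ F^{n+(s−1)+m} satisfies r_{i'} · (v̂, p, e_k) = 0 for all i' ≠ i. -/

import Mathlib

/-!
Splitting the dot product along the blocks of the packet turns orthogonality to the key vectors into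
the linear system `c + R p = 0`, where `c` collects the contributions of the data and of the
augmentation. Such a system has exactly one solution when `R` is invertible.
-/

/-- The matrix `R` of the padding system: row `a` is the part of the key vector `r a` that meets the
`d` padding coordinates, which lie between `n` data and `m` augmentation coordinates. -/
def paddingMatrix {ι α : Type*} {n d m : ℕ} (r : ι → Fin (n + d + m) → α) :
    Matrix ι (Fin d) α :=
  Matrix.of fun a l => r a (Fin.castAdd m (Fin.natAdd n l))

section BlockDotProduct

variable {α : Type*} [NonUnitalNonAssocSemiring α] {n d m : ℕ}

theorem dotProduct_append (x : Fin (n + m) → α) (u : Fin n → α) (w : Fin m → α) :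
    x ⬝ᵥ Fin.append u w = (x ∘ Fin.castAdd m) ⬝ᵥ u + (x ∘ Fin.natAdd n) ⬝ᵥ w := by
  simp only [dotProduct, Fin.sum_univ_add, Fin.append_left, Fin.append_right, Function.comp_apply]

theorem dotProduct_append_append_eq_add_mulVec {ι : Type*} (r : ι → Fin (n + d + m) → α) (a : ι)
    (v : Fin n → α) (p : Fin d → α) (w : Fin m → α) :
    r a ⬝ᵥ Fin.append (Fin.append v p) w =
      r a ⬝ᵥ Fin.append (Fin.append v 0) w + (paddingMatrix r).mulVec p a := by
  have padding_part : (paddingMatrix r).mulVec p a =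
      ((r a ∘ Fin.castAdd m) ∘ Fin.natAdd n) ⬝ᵥ p := rfl
  rw [padding_part]
  simp only [dotProduct_append, dotProduct_zero, add_zero]
  exact add_right_comm _ _ _

end BlockDotProduct

theorem mulVec_bijective_of_isUnit {κ A : Type*} [Fintype κ] [DecidableEq κ] [Semiring A]
    {M : Matrix κ κ A} (hM : IsUnit M) : Function.Bijective M.mulVec := by
  refine ⟨Matrix.mulVec_injective_of_isUnit hM, fun b => ?_⟩
  obtain ⟨N, hMN⟩ := hM.exists_right_inv
  exact ⟨N.mulVec b, by rw [Matrix.mulVec_mulVec, hMN, Matrix.one_mulVec]⟩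

theorem existsUnique_add_mulVec_eq_zero {κ A : Type*} [Fintype κ] [DecidableEq κ] [Ring A]
    {M : Matrix κ κ A} (hM : IsUnit M) (c : κ → A) : ∃! p : κ → A, c + M.mulVec p = 0 := by
  simpa only [add_eq_zero_iff_neg_eq, eq_comm] using
    (mulVec_bijective_of_isUnit hM).existsUnique (-c)

theorem cpk_padding_exists_unique_general {A ι : Type*} [Ring A] {n d m : ℕ}
    (r : ι → Fin (n + d + m) → A) (e : ι ≃ Fin d) (hR : IsUnit (paddingMatrix (r ∘ e.symm)))
    (v : Fin n → A) (w : Fin m → A) :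
    ∃! p : Fin d → A, ∀ i, r i ⬝ᵥ Fin.append (Fin.append v p) w = 0 := by
  let c : Fin d → A := fun a => r (e.symm a) ⬝ᵥ Fin.append (Fin.append v 0) w
  have orthogonal_iff (p : Fin d → A) :
      (∀ i, r i ⬝ᵥ Fin.append (Fin.append v p) w = 0) ↔
        c + (paddingMatrix (r ∘ e.symm)).mulVec p = 0 := by
    rw [← e.symm.forall_congr_right, funext_iff]
    exact forall_congr' fun a =>
      (dotProduct_append_append_eq_add_mulVec (r ∘ e.symm) a v p w).congr_left
  simpa only [orthogonal_iff] using existsUnique_add_mulVec_eq_zero hR c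

/-- existence and uniqueness of the CPK padding.  Fix a source index
`i` and let `r_{i'} ∈ F^{n+(s−1)+m}` (for `i' ≠ i`) be the controller's vectors.
If the `(s−1)×(s−1)` matrix `R` with entries `R_{i',l} = r_{i'}^{(n+l)}` is
invertible, then for every data vector `v̂ ∈ F^n` and every augmentation index
`k ∈ Fin m` there is a unique padding `p ∈ F^{s−1}` such that the padded packet
`(v̂, p, e_k)` is orthogonal to `r_{i'}` for all `i' ≠ i`.  (The rows of `R` are
enumerated by a fixed bijection `e : {i' ≠ i} ≃ Fin (s−1)`.) -/
theorem cpk_padding_exists_unique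
    (q s g n : ℕ) (hq : q.Prime) (hs : 1 < s) (hg : 0 < g) (hn : 0 < n)
    (i : Fin s)
    (r : Fin s → Fin (n + (s - 1) + s * g) → ZMod q)
    (e : {i' : Fin s // i' ≠ i} ≃ Fin (s - 1))
    (hR : IsUnit (Matrix.of fun a l : Fin (s - 1) =>
      r (e.symm a).1 ⟨n + l.1, by have := l.2; omega⟩))
    (vhat : Fin n → ZMod q) (k : Fin (s * g)) :
    ∃! p : Fin (s - 1) → ZMod q,
      ∀ i' : Fin s, i' ≠ i →
        (∑ r' : Fin (n + (s - 1) + s * g),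
            r i' r' * (Fin.append (Fin.append vhat p) (Pi.single k (1 : ZMod q))) r')
          = 0 := by
  simpa only [dotProduct, Subtype.forall] using
    cpk_padding_exists_unique_general (fun i' : {i' // i' ≠ i} => r i') e hR vhat (Pi.single k 1)
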